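/- Fix δ ∈ (0,1/3] and let μ be the Borel measure on ℝ determined by μ([j + i·3^{−n}, j + (i+1)·3^{−n})) = δ^{n−k(i)}(1−2δ)^{k(i)} for all integers j, n ≥ 0 and 0 ≤ i < 3^n, where k(i) is the number of digits equal to 1 among the first n ternary digits of i. Then μ is a doubling measure on ℝ: there exists a constant C(δ) < ∞ such that μ(B(x,2r)) ≤ C(δ)·μ(B(x,r)) for all x ∈ ℝ and r > 0. -/

import Mathlib

open MeasureTheory Set

noncomputable section

/-- The number of ternary (base-3) digits of `i` equal to `1`. -/
def ternaryOnes (i : ℕ) : ℕ := (Nat.digits 3 i).count 1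

/-- The triadic mass assignment determining the measure `μ`. -/
def ternarySpec (δ : ℝ) (μ : Measure ℝ) : Prop :=
  ∀ (j : ℤ) (n i : ℕ), i < 3 ^ n →
    μ (Set.Ico ((j : ℝ) + (i : ℝ) / 3 ^ n) ((j : ℝ) + ((i : ℝ) + 1) / 3 ^ n)) =
      ENNReal.ofReal (δ ^ (n - ternaryOnes i) * (1 - 2 * δ) ^ ternaryOnes i)

/-- The mass of the triadic interval `[m / 3 ^ n, (m + 1) / 3 ^ n)`, by recursion on the last
ternary digit of `m`. -/
def triadicWeight (δ : ℝ) : ℕ → ℤ → ℝ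
  | 0, _ => 1
  | n + 1, m => triadicWeight δ n (m / 3) * if m % 3 = 1 then 1 - 2 * δ else δ

lemma triadicWeight_pos {δ : ℝ} (hδ0 : 0 < δ) (hδ : δ ≤ 1 / 3) (n : ℕ) (m : ℤ) :
    0 < triadicWeight δ n m := by
  induction n generalizing m with
  | zero => simp [triadicWeight]
  | succ n ih =>
    rw [triadicWeight]
    refine mul_pos (ih _) ?_
    split_ifs <;> linarith

/-- Adjacent triadic intervals of the same generation have comparable masses. -/
lemma triadicWeight_adjacent {δ : ℝ} (hδ0 : 0 < δ) (hδ : δ ≤ 1 / 3) (n : ℕ) (m : ℤ) :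
    δ * triadicWeight δ n (m + 1) ≤ (1 - 2 * δ) * triadicWeight δ n m ∧
      δ * triadicWeight δ n m ≤ (1 - 2 * δ) * triadicWeight δ n (m + 1) := by
  induction n generalizing m with
  | zero => simp only [triadicWeight]; constructor <;> linarith
  | succ n ih =>
    simp only [triadicWeight]
    have hpos := triadicWeight_pos hδ0 hδ n (m / 3)
    have hδ' : 0 ≤ 1 - 3 * δ := by linarith
    have hsq : 0 ≤ (1 - 3 * δ) * (1 - δ) := mul_nonneg hδ' (by linarith)
    have h3 : m % 3 = 0 ∨ m % 3 = 1 ∨ m % 3 = 2 := by omega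
    rcases h3 with h | h | h
    · rw [show (m + 1) / 3 = m / 3 by omega, if_pos (by omega), if_neg (by omega)]
      constructor <;> nlinarith
    · rw [show (m + 1) / 3 = m / 3 by omega, if_neg (by omega), if_pos (by omega)]
      constructor <;> nlinarith
    · rw [show (m + 1) / 3 = m / 3 + 1 by omega, if_neg (by omega), if_neg (by omega)]
      obtain ⟨h1, h2⟩ := ih (m / 3)
      constructor <;> nlinarith

lemma triadicWeight_le_pow_mul {δ : ℝ} (hδ0 : 0 < δ) (hδ : δ ≤ 1 / 3) (n k : ℕ) (m : ℤ) :
    triadicWeight δ n (m + k) ≤ ((1 - 2 * δ) / δ) ^ k * triadicWeight δ n m ∧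
      triadicWeight δ n (m - k) ≤ ((1 - 2 * δ) / δ) ^ k * triadicWeight δ n m := by
  have hK : 0 ≤ (1 - 2 * δ) / δ := div_nonneg (by linarith) hδ0.le
  induction k with
  | zero => simp
  | succ k ih =>
    have hadj (a b : ℝ) (h : δ * a ≤ (1 - 2 * δ) * b) : a ≤ (1 - 2 * δ) / δ * b := by
      rw [div_mul_eq_mul_div, le_div_iff₀ hδ0]; linarith
    have h1 := hadj _ _ (triadicWeight_adjacent hδ0 hδ n (m + k)).1
    have h2 := hadj _ _ (triadicWeight_adjacent hδ0 hδ n (m - (k + 1 : ℕ))).2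
    rw [show m - ((k + 1 : ℕ) : ℤ) + 1 = m - k by push_cast; ring] at h2
    rw [show m + ((k + 1 : ℕ) : ℤ) = m + k + 1 by push_cast; ring, pow_succ', mul_assoc]
    exact ⟨h1.trans (mul_le_mul_of_nonneg_left ih.1 hK),
      h2.trans (mul_le_mul_of_nonneg_left ih.2 hK)⟩

lemma ternaryOnes_eq_div_add (i : ℕ) :
    ternaryOnes i = ternaryOnes (i / 3) + if i % 3 = 1 then 1 else 0 := by
  rcases Nat.eq_zero_or_pos i with rfl | hi
  · simp [ternaryOnes]
  · rw [ternaryOnes, Nat.digits_def' (by norm_num) hi, List.count_cons, ternaryOnes]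
    simp

lemma ternaryOnes_le {n i : ℕ} (hi : i < 3 ^ n) : ternaryOnes i ≤ n :=
  List.count_le_length.trans ((Nat.digits_length_le_iff (by norm_num) i).2 hi)

lemma triadicWeight_eq_ternaryOnes (δ : ℝ) (j : ℤ) (n i : ℕ) (hi : i < 3 ^ n) :
    triadicWeight δ n (j * 3 ^ n + i) =
      δ ^ (n - ternaryOnes i) * (1 - 2 * δ) ^ ternaryOnes i := by
  induction n generalizing i with
  | zero =>
    obtain rfl : i = 0 := by simpa using hi
    simp [triadicWeight, ternaryOnes]
  | succ n ih =>
    have hi' : i / 3 < 3 ^ n := by rw [pow_succ] at hi; omega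
    have hle := ternaryOnes_le hi'
    have hrw : j * 3 ^ (n + 1) + (i : ℤ) = 3 * (j * 3 ^ n) + i := by ring
    have hdiv : (j * 3 ^ (n + 1) + (i : ℤ)) / 3 = j * 3 ^ n + (i / 3 : ℕ) := by omega
    have hmod : (j * 3 ^ (n + 1) + (i : ℤ)) % 3 = 1 ↔ i % 3 = 1 := by omega
    rw [triadicWeight, hdiv, ih _ hi', ternaryOnes_eq_div_add i]
    simp only [hmod]
    split_ifs
    · rw [Nat.add_sub_add_right]; ring
    · rw [add_zero, Nat.sub_add_comm hle]; ring

namespace ternarySpec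

variable {δ : ℝ} {μ : Measure ℝ}

lemma measure_Ico_eq_triadicWeight (hμ : ternarySpec δ μ) (n : ℕ) (m : ℤ) :
    μ (Ico (m / 3 ^ n : ℝ) ((m + 1) / 3 ^ n)) = ENNReal.ofReal (triadicWeight δ n m) := by
  have h3 : (0 : ℤ) < 3 ^ n := by positivity
  obtain ⟨i, hi⟩ := Int.eq_ofNat_of_zero_le (Int.emod_nonneg m h3.ne')
  have hlt : i < 3 ^ n := by
    have := Int.emod_lt_of_pos m h3
    rw [hi] at this
    exact_mod_cast this
  have hm : m = m / 3 ^ n * 3 ^ n + i := by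
    rw [← hi]; exact (Int.ediv_mul_add_emod m (3 ^ n)).symm
  generalize m / 3 ^ n = j at hm
  subst hm
  rw [triadicWeight_eq_ternaryOnes δ j n i hlt, ← hμ j n i hlt]
  push_cast
  congr 2 <;> field_simp
  ring

lemma measure_Ico_eq_sum (hμ : ternarySpec δ μ) (n : ℕ) (m : ℤ) (N : ℕ) :
    μ (Ico (m / 3 ^ n : ℝ) ((m + N) / 3 ^ n)) =
      ∑ k ∈ Finset.range N, ENNReal.ofReal (triadicWeight δ n (m + k)) := by
  induction N with
  | zero => simp
  | succ N ih =>
    have hsplit : Ico (m / 3 ^ n : ℝ) ((m + (N + 1 : ℕ)) / 3 ^ n) =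
        Ico (m / 3 ^ n : ℝ) ((m + N) / 3 ^ n) ∪
          Ico (((m + N : ℤ) : ℝ) / 3 ^ n) (((m + N : ℤ) + 1) / 3 ^ n) := by
      push_cast
      rw [Ico_union_Ico_eq_Ico, add_assoc]
      · gcongr; simp
      · gcongr ?_ / _; linarith
    rw [hsplit, measure_union _ measurableSet_Ico, ih, hμ.measure_Ico_eq_triadicWeight,
      Finset.sum_range_succ]
    push_cast
    exact Ico_disjoint_Ico_same

lemma measure_ball_two_mul_le_of_le_one (hμ : ternarySpec δ μ) (hδ0 : 0 < δ) (hδ : δ ≤ 1 / 3)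
    {x r : ℝ} (hr : 0 < r) (hr1 : r ≤ 1) :
    μ (Metric.ball x (2 * r)) ≤
      ENNReal.ofReal (13 * ((1 - 2 * δ) / δ) ^ 6) * μ (Metric.ball x r) := by
  obtain ⟨n, hlow, hupp⟩ := exists_nat_pow_near_of_lt_one (y := (1 / 3 : ℝ)) hr hr1
    (by norm_num) (by norm_num)
  rw [one_div_pow] at hlow hupp
  have h3 : (0 : ℝ) < 3 ^ (n + 1) := by positivity
  have hlow' : 1 < r * 3 ^ (n + 1) := by rwa [div_lt_iff₀ h3] at hlow
  have hupp' : r * 3 ^ (n + 1) ≤ 3 := by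
    rw [le_div_iff₀ (by positivity)] at hupp
    rw [pow_succ]; linarith
  set p : ℕ := n + 1
  set m : ℤ := ⌊x * 3 ^ p⌋
  have hm1 : (m : ℝ) ≤ x * 3 ^ p := Int.floor_le _
  have hm2 : x * 3 ^ p < m + 1 := Int.lt_floor_add_one _
  have hK1 : 1 ≤ (1 - 2 * δ) / δ := by rw [le_div_iff₀ hδ0]; linarith
  have hK0 : 0 ≤ (1 - 2 * δ) / δ := zero_le_one.trans hK1
  have hw := triadicWeight_pos hδ0 hδ p m
  have hsub : Ico (m / 3 ^ p : ℝ) ((m + 1) / 3 ^ p) ⊆ Metric.ball x r := by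
    rintro y ⟨hy1, hy2⟩
    rw [div_le_iff₀ h3] at hy1
    rw [lt_div_iff₀ h3] at hy2
    rw [Real.ball_eq_Ioo]
    constructor <;> refine lt_of_mul_lt_mul_right ?_ h3.le <;> linarith
  have hsup : Metric.ball x (2 * r) ⊆
      Ico (((m - 6 : ℤ) : ℝ) / 3 ^ p) (((m - 6 : ℤ) + (13 : ℕ)) / 3 ^ p) := by
    rw [Real.ball_eq_Ioo]
    rintro y ⟨hy1, hy2⟩
    have hy1' := mul_lt_mul_of_pos_right hy1 h3
    have hy2' := mul_lt_mul_of_pos_right hy2 h3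
    push_cast
    constructor
    · rw [div_le_iff₀ h3]; linarith
    · rw [lt_div_iff₀ h3]; linarith
  have hterm (k : ℕ) (hk : k ∈ Finset.range 13) :
      ENNReal.ofReal (triadicWeight δ p (m - 6 + k)) ≤
        ENNReal.ofReal (((1 - 2 * δ) / δ) ^ 6 * triadicWeight δ p m) := by
    rw [Finset.mem_range] at hk
    refine ENNReal.ofReal_le_ofReal ?_
    obtain ⟨l, hl, h | h⟩ : ∃ l : ℕ, l ≤ 6 ∧
        (m - 6 + (k : ℤ) = m + l ∨ m - 6 + (k : ℤ) = m - l) := by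
      rcases le_total k 6 with h | h
      · exact ⟨6 - k, by omega, Or.inr (by omega)⟩
      · exact ⟨k - 6, by omega, Or.inl (by omega)⟩
    · rw [h]
      exact (triadicWeight_le_pow_mul hδ0 hδ p l m).1.trans (by gcongr)
    · rw [h]
      exact (triadicWeight_le_pow_mul hδ0 hδ p l m).2.trans (by gcongr)
  calc μ (Metric.ball x (2 * r))
      ≤ ∑ k ∈ Finset.range 13, ENNReal.ofReal (triadicWeight δ p (m - 6 + k)) := by
        rw [← hμ.measure_Ico_eq_sum]; exact measure_mono hsup
    _ ≤ 13 * ENNReal.ofReal (((1 - 2 * δ) / δ) ^ 6 * triadicWeight δ p m) := by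
        refine (Finset.sum_le_card_nsmul _ _ _ hterm).trans ?_
        simp
    _ = ENNReal.ofReal (13 * ((1 - 2 * δ) / δ) ^ 6) * ENNReal.ofReal (triadicWeight δ p m) := by
        rw [← ENNReal.ofReal_mul (by positivity), mul_assoc,
          ENNReal.ofReal_mul (p := 13) (by norm_num)]
        simp
    _ ≤ _ := by
        rw [← hμ.measure_Ico_eq_triadicWeight]
        gcongr

lemma measure_ball_two_mul_le_of_one_lt (hμ : ternarySpec δ μ) {x r : ℝ} (hr : 1 < r) :
    μ (Metric.ball x (2 * r)) ≤ 9 * μ (Metric.ball x r) := by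
  have hunit (m : ℤ) (N : ℕ) : μ (Ico (m : ℝ) (m + N)) = N := by
    simpa [triadicWeight] using hμ.measure_Ico_eq_sum 0 m N
  have hx1 := Int.floor_le x
  have hx2 := Int.lt_floor_add_one x
  have hN1 := Nat.floor_le (zero_le_one.trans hr.le)
  have hN2 := Nat.lt_floor_add_one r
  have hN : 1 ≤ ⌊r⌋₊ := (Nat.one_le_floor_iff r).2 hr.le
  generalize ⌊x⌋ = m at *
  generalize ⌊r⌋₊ = N at *
  have hsub : Ico (m : ℝ) (m + N) ⊆ Metric.ball x r := by
    rw [Real.ball_eq_Ioo]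
    rintro y ⟨hy1, hy2⟩
    constructor <;> linarith
  have hsup : Metric.ball x (2 * r) ⊆
      Ico ((m - 2 * N - 2 : ℤ) : ℝ) ((m - 2 * N - 2 : ℤ) + (4 * N + 5 : ℕ)) := by
    rw [Real.ball_eq_Ioo]
    rintro y ⟨hy1, hy2⟩
    push_cast
    constructor <;> linarith
  calc μ (Metric.ball x (2 * r)) ≤ ((4 * N + 5 : ℕ) : ENNReal) := by
        rw [← hunit (m - 2 * N - 2)]; exact measure_mono hsup
    _ ≤ ((9 * N : ℕ) : ENNReal) := by
        exact_mod_cast (by omega : 4 * N + 5 ≤ 9 * N)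
    _ = 9 * μ (Ico (m : ℝ) (m + N)) := by rw [hunit]; push_cast; rfl
    _ ≤ 9 * μ (Metric.ball x r) := by gcongr

end ternarySpec

/-- The measure `μ` determined by the triadic mass assignment is doubling on `ℝ`: there is a
finite constant `C(δ)` with `μ(B(x,2r)) ≤ C(δ) · μ(B(x,r))` for all `x ∈ ℝ`, `r > 0`. -/
theorem ternary_measure_is_doubling (δ : ℝ) (hδ0 : 0 < δ) (hδ : δ ≤ 1 / 3)
    (μ : Measure ℝ) (hμ : ternarySpec δ μ) :
    ∃ C : NNReal, ∀ (x : ℝ) (r : ℝ), 0 < r →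
      μ (Metric.ball x (2 * r)) ≤ C * μ (Metric.ball x r) := by
  refine ⟨max (13 * ((1 - 2 * δ) / δ) ^ 6).toNNReal 9, fun x r hr => ?_⟩
  rcases le_or_gt r 1 with hr1 | hr1
  · refine (hμ.measure_ball_two_mul_le_of_le_one hδ0 hδ hr hr1).trans ?_
    gcongr
    exact ENNReal.coe_le_coe.2 (le_max_left _ _)
  · refine (hμ.measure_ball_two_mul_le_of_one_lt hr1).trans ?_
    gcongr
    exact_mod_cast le_max_right _ (9 : NNReal)
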